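/- arXiv:1003.4842 — 2 statements merged into one kernel-verified Lean document; each statement's English description precedes it below -/
import Mathlib

section
/- Let z₁, …, z_s (s ≥ 1) be distinct points of the unit circle S¹ ⊂ ℂ. For i = 1, 2 let βᵢ : S¹ \ {z₁,…,z_s} → ℝ be smooth, and assume that for each j = 1,…,s there is a smooth real function g_j^i defined on a neighborhood of 0 in ℝ with g_j^i(0) ≠ 0 such that βᵢ(z_j·e^{iθ}) = 1/(θ·g_j^i(θ)) for all θ ≠ 0 sufficiently close to 0. Assume moreover that sign(g_j^1(0)) = sign(g_j^2(0)) for every j. Then there exist smooth functions a, b : S¹ → ℝ with b everywhere positive such that a(z) = b(z)·β₂(z) − β₁(z) for every z ∈ S¹ \ {z₁,…,z_s}. -/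
open scoped Manifold Topology

/-!
The condition on `(a, b)` is convex in each fibre, so a partition of unity reduces the problem to
finding local solutions. Away from the `z j` one takes `b = 1`. Near `z j` the two slopes are
quotients `p / g 0 j`, `p / g 1 j` with the same numerator `p θ = θ⁻¹`, so `b = g 1 j / g 0 j`,
`a = 0` is a solution; it is smooth because the denominators do not vanish and positive because
they have the same sign.
-/

section Fibers

variable {M : Type*}

/-- The pairs `(a, b)` for which the matrix `(1, a; 0, b)` is an admissible matching at `w` of the
distribution of slope `β 0` with that of slope `β 1`. At points of the singular set `Z`, where
the slopes carry no meaning, only `b > 0` is required. -/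
def matchingPairs (Z : Set M) (β : Fin 2 → M → ℝ) (w : M) : Set (ℝ × ℝ) :=
  {p | 0 < p.2 ∧ (w ∉ Z → p.1 = p.2 * β 1 w - β 0 w)}

theorem convex_matchingPairs (Z : Set M) (β : Fin 2 → M → ℝ) (w : M) :
    Convex ℝ (matchingPairs Z β w) := by
  rintro ⟨a, b⟩ ⟨hb, hab⟩ ⟨a', b'⟩ ⟨hb', hab'⟩ c d hc hd hcd
  refine ⟨convex_Ioi (0 : ℝ) hb hb' hc hd hcd, fun hw => ?_⟩
  simp only [Prod.smul_mk, Prod.mk_add_mk, smul_eq_mul] at hab hab' ⊢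
  linear_combination c * hab hw + d * hab' hw - β 0 w * hcd

theorem eventually_quotient_mem_matchingPairs [TopologicalSpace M] {Z : Set M}
    {β G : Fin 2 → M → ℝ} {P : M → ℝ} {z : M} (hG : ∀ i, ContinuousAt (G i) z)
    (hpos : 0 < G 0 z * G 1 z) (hβ : ∀ i, ∀ᶠ w in 𝓝[Zᶜ] z, β i w = P w / G i w) :
    ∀ᶠ w in 𝓝 z, (0, G 1 w / G 0 w) ∈ matchingPairs Z β w := by
  filter_upwards [((hG 0).mul (hG 1)).eventually (lt_mem_nhds hpos),
    eventually_nhdsWithin_iff.1 (hβ 0), eventually_nhdsWithin_iff.1 (hβ 1)] with w hw hβ₀ hβ₁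
  have hG₀ : G 0 w ≠ 0 := left_ne_zero_of_mul hw.ne'
  have hG₁ : G 1 w ≠ 0 := right_ne_zero_of_mul hw.ne'
  refine ⟨?_, fun hwZ => ?_⟩
  · simpa only [Pi.mul_apply, div_pos_iff, mul_pos_iff, and_comm] using hw
  · simp only [hβ₀ hwZ, hβ₁ hwZ]
    field_simp
    ring

end Fibers

section Manifold

variable {E H M : Type*} [NormedAddCommGroup E] [NormedSpace ℝ E] [FiniteDimensional ℝ E]
  [TopologicalSpace H] {I : ModelWithCorners ℝ E H} [TopologicalSpace M] [ChartedSpace H M]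
  [IsManifold I (⊤ : ℕ∞) M] [T2Space M] [SigmaCompactSpace M] {n : ℕ∞} {Z : Set M}
  {β : Fin 2 → M → ℝ}

theorem exists_contMDiff_matching_of_local (hZ : IsClosed Z)
    (hβ : ∀ i, ContMDiffOn I 𝓘(ℝ, ℝ) n (β i) Zᶜ)
    (hloc : ∀ z ∈ Z, ∃ U ∈ 𝓝 z, ∃ f : M → ℝ × ℝ, ContMDiffOn I 𝓘(ℝ, ℝ × ℝ) n f U ∧
      ∀ w ∈ U, f w ∈ matchingPairs Z β w) :
    ∃ a b : M → ℝ, ContMDiff I 𝓘(ℝ, ℝ) n a ∧ ContMDiff I 𝓘(ℝ, ℝ) n b ∧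
      (∀ w, 0 < b w) ∧ ∀ w, w ∉ Z → a w = b w * β 1 w - β 0 w := by
  have hloc' : ∀ z, ∃ U ∈ 𝓝 z, ∃ f : M → ℝ × ℝ, ContMDiffOn I 𝓘(ℝ, ℝ × ℝ) n f U ∧
      ∀ w ∈ U, f w ∈ matchingPairs Z β w := by
    intro z
    by_cases hz : z ∈ Z
    · exact hloc z hz
    · exact ⟨Zᶜ, hZ.isOpen_compl.mem_nhds hz, fun w => (β 1 w - β 0 w, 1),
        ((hβ 1).sub (hβ 0)).prodMk_space contMDiffOn_const,
        fun w _ => ⟨one_pos, fun _ => by simp only [one_mul]⟩⟩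
  obtain ⟨f, hf⟩ :=
    exists_contMDiffMap_forall_mem_convex_of_local I (convex_matchingPairs Z β) hloc'
  exact ⟨fun w => (f w).1, fun w => (f w).2, contDiff_fst.contMDiff.comp f.contMDiff,
    contDiff_snd.contMDiff.comp f.contMDiff, fun w => (hf w).1, fun w => (hf w).2⟩

theorem exists_contMDiff_matching_of_local_quotients (hZ : IsClosed Z)
    (hβ : ∀ i, ContMDiffOn I 𝓘(ℝ, ℝ) n (β i) Zᶜ)
    (hquot : ∀ z ∈ Z, ∃ (P : M → ℝ) (G : Fin 2 → M → ℝ),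
      (∀ i, ∀ᶠ w in 𝓝 z, ContMDiffAt I 𝓘(ℝ, ℝ) n (G i) w) ∧ 0 < G 0 z * G 1 z ∧
      ∀ i, ∀ᶠ w in 𝓝[Zᶜ] z, β i w = P w / G i w) :
    ∃ a b : M → ℝ, ContMDiff I 𝓘(ℝ, ℝ) n a ∧ ContMDiff I 𝓘(ℝ, ℝ) n b ∧
      (∀ w, 0 < b w) ∧ ∀ w, w ∉ Z → a w = b w * β 1 w - β 0 w := by
  refine exists_contMDiff_matching_of_local hZ hβ fun z hz => ?_
  obtain ⟨P, G, hG, hpos, hβG⟩ := hquot z hz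
  have hGcont : ∀ i, ContinuousAt (G i) z := fun i => (hG i).self_of_nhds.continuousAt
  have hG₀ : ∀ᶠ w in 𝓝 z, G 0 w ≠ 0 := (hGcont 0).eventually_ne (left_ne_zero_of_mul hpos.ne')
  have hsmooth : ∀ᶠ w in 𝓝 z, ContMDiffAt I 𝓘(ℝ, ℝ) n (fun w => G 1 w / G 0 w) w := by
    filter_upwards [hG 0, hG 1, hG₀] with w h₀ h₁ hne using h₁.div₀ h₀ hne
  exact ⟨_, hsmooth.and (eventually_quotient_mem_matchingPairs hGcont hpos hβG),
    fun w => (0, G 1 w / G 0 w),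
    fun w hw => (contMDiffAt_const.prodMk_space hw.1).contMDiffWithinAt, fun w hw => hw.2⟩

end Manifold

section Angle

/-- The angle `θ ∈ (-π, π]` with `w = z * exp (i θ)`: the coordinate centred at `z` in which the
poles of the slopes are described. -/
noncomputable def angleFrom (z w : Circle) : ℝ :=
  Complex.arg ((z⁻¹ * w : Circle) : ℂ)

variable {z w : Circle}

@[simp]
theorem angleFrom_self (z : Circle) : angleFrom z z = 0 := by
  simp [angleFrom]

theorem angleFrom_eq_zero : angleFrom z w = 0 ↔ w = z := by
  rw [angleFrom, Circle.arg_eq_zero, inv_mul_eq_one, eq_comm]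

theorem mul_exp_angleFrom (z w : Circle) : z * Circle.exp (angleFrom z w) = w := by
  rw [angleFrom, Circle.exp_arg, mul_inv_cancel_left]

theorem contDiffAt_complex_arg {x : ℂ} (hx : x ∈ Complex.slitPlane) {n : WithTop ℕ∞} :
    ContDiffAt ℝ n Complex.arg x := by
  have hlog : ContDiffAt ℝ n Complex.log x := (Complex.contDiffAt_log hx).restrict_scalars ℝ
  simpa only [Function.comp_def, Complex.imCLM_apply, Complex.log_im] using
    Complex.imCLM.contDiff.contDiffAt.comp x hlog

theorem contMDiff_circle_coe {n : WithTop ℕ∞} :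
    ContMDiff (𝓡 1) 𝓘(ℝ, ℂ) n (fun w : Circle => (w : ℂ)) :=
  haveI := finrank_real_complex_fact'
  contMDiff_coe_sphere

theorem contMDiffAt_angleFrom (hw : ((z⁻¹ * w : Circle) : ℂ) ∈ Complex.slitPlane)
    {n : WithTop ℕ∞} : ContMDiffAt (𝓡 1) 𝓘(ℝ, ℝ) n (angleFrom z) w := by
  have hmul : ContMDiff (𝓡 1) (𝓡 1) n (z⁻¹ * · : Circle → Circle) :=
    contMDiff_mul_left
  exact (contDiffAt_complex_arg hw).contMDiffAt.comp w (contMDiff_circle_coe.comp hmul).contMDiffAt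

theorem eventually_contMDiffAt_angleFrom (z : Circle) (n : WithTop ℕ∞) :
    ∀ᶠ w in 𝓝 z, ContMDiffAt (𝓡 1) 𝓘(ℝ, ℝ) n (angleFrom z) w := by
  have hcont : Continuous fun w : Circle => ((z⁻¹ * w : Circle) : ℂ) := by fun_prop
  filter_upwards [hcont.continuousAt.eventually
    (Complex.isOpen_slitPlane.mem_nhds (by simp : ((z⁻¹ * z : Circle) : ℂ) ∈ Complex.slitPlane))]
    with w hw using contMDiffAt_angleFrom hw

theorem tendsto_angleFrom (z : Circle) : Filter.Tendsto (angleFrom z) (𝓝 z) (𝓝 0) := by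
  have hcont : ContinuousAt (angleFrom z) z :=
    (eventually_contMDiffAt_angleFrom z 0).self_of_nhds.continuousAt
  simpa only [ContinuousAt, angleFrom_self] using hcont

theorem tendsto_angleFrom_nhdsNE (z : Circle) :
    Filter.Tendsto (angleFrom z) (𝓝[≠] z) (𝓝[≠] 0) :=
  tendsto_nhdsWithin_iff.2 ⟨(tendsto_angleFrom z).mono_left nhdsWithin_le_nhds,
    eventually_mem_nhdsWithin.mono fun _ hw => angleFrom_eq_zero.not.2 hw⟩

theorem eventually_contMDiffAt_comp_angleFrom {n : WithTop ℕ∞} {g : ℝ → ℝ} {U : Set ℝ}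
    (hU : U ∈ 𝓝 0) (hg : ContDiffOn ℝ n g U) (z : Circle) :
    ∀ᶠ w in 𝓝 z, ContMDiffAt (𝓡 1) 𝓘(ℝ, ℝ) n (fun w => g (angleFrom z w)) w := by
  filter_upwards [(tendsto_angleFrom z).eventually (eventually_mem_nhds_iff.2 hU),
    eventually_contMDiffAt_angleFrom z n] with w hwU hw
  exact (hg.contDiffAt hwU).contMDiffAt.comp w hw

theorem eventually_eq_comp_angleFrom {β : Circle → ℝ} {f : ℝ → ℝ}
    (hβ : ∀ᶠ θ in 𝓝[≠] 0, β (z * Circle.exp θ) = f θ) :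
    ∀ᶠ w in 𝓝[≠] z, β w = f (angleFrom z w) := by
  filter_upwards [(tendsto_angleFrom_nhdsNE z).eventually hβ] with w hw
  rwa [mul_exp_angleFrom] at hw

end Angle

theorem mul_pos_of_real_sign_eq {x y : ℝ} (hx : x ≠ 0) (h : Real.sign x = Real.sign y) :
    0 < x * y := by
  have hy : y ≠ 0 := by rwa [Ne, ← Real.sign_eq_zero_iff, ← h, Real.sign_eq_zero_iff]
  have hprod : 0 < Real.sign x ^ 2 * (x * y) :=
    calc
      0 < Real.sign x * x * (Real.sign y * y) :=
        mul_pos (Real.sign_mul_pos_of_ne_zero x hx) (Real.sign_mul_pos_of_ne_zero y hy)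
      _ = Real.sign x ^ 2 * (x * y) := by rw [← h]; ring
  exact pos_of_mul_pos_right hprod (sq_nonneg _)

theorem stmt_2_general {ι : Type*} [Finite ι] {n : ℕ∞} (z : ι → Circle) (β : Fin 2 → Circle → ℝ)
    (hβ : ∀ i, ContMDiffOn (𝓡 1) 𝓘(ℝ, ℝ) n (β i) (Set.range z)ᶜ)
    (p : ι → ℝ → ℝ) (g : Fin 2 → ι → ℝ → ℝ)
    (hg : ∀ i j, ∃ U ∈ 𝓝 (0 : ℝ), ContDiffOn ℝ n (g i j) U)
    (hpos : ∀ j, 0 < g 0 j 0 * g 1 j 0)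
    (hmatch : ∀ i j, ∀ᶠ θ in 𝓝[≠] 0, β i (z j * Circle.exp θ) = p j θ / g i j θ) :
    ∃ a b : Circle → ℝ, ContMDiff (𝓡 1) 𝓘(ℝ, ℝ) n a ∧ ContMDiff (𝓡 1) 𝓘(ℝ, ℝ) n b ∧
      (∀ w, 0 < b w) ∧ ∀ w, w ∉ Set.range z → a w = b w * β 1 w - β 0 w := by
  refine exists_contMDiff_matching_of_local_quotients (Set.finite_range z).isClosed hβ ?_
  rintro _ ⟨j, rfl⟩
  choose U hU hgU using fun i => hg i j
  have hsub : (Set.range z)ᶜ ⊆ {z j}ᶜ := by simp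
  exact ⟨fun w => p j (angleFrom (z j) w), fun i w => g i j (angleFrom (z j) w),
    fun i => eventually_contMDiffAt_comp_angleFrom (hU i) (hgU i) (z j), by simpa using hpos j,
    fun i => (eventually_eq_comp_angleFrom (hmatch i j)).filter_mono (nhdsWithin_mono _ hsub)⟩

/-- let `z 1, …, z s` (`s ≥ 1`) be distinct points of the circle, and for
`i = 1,2` let `βᵢ` be smooth on the complement of the `z j`'s, with
`βᵢ(z j · e^{iθ}) = 1/(θ·g_j^i(θ))` for `θ ≠ 0` near `0`, where `g_j^i` is smooth near `0`
with `g_j^i(0) ≠ 0`; if `sign (g_j^1 0) = sign (g_j^2 0)` for every `j`, then there are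
smooth `a, b : S¹ → ℝ` with `b > 0` everywhere such that `a = b·β₂ − β₁` off the `z j`'s. -/
theorem stmt_2 (s : ℕ) (hs : 1 ≤ s) (z : Fin s → Circle) (hz : Function.Injective z)
    (β : Fin 2 → Circle → ℝ)
    (hβ : ∀ i, ContMDiffOn (𝓡 1) 𝓘(ℝ, ℝ) (⊤ : ℕ∞) (β i) (Set.range z)ᶜ)
    (g : Fin 2 → Fin s → ℝ → ℝ)
    (hg : ∀ i j, ∃ ε > (0 : ℝ), ContDiffOn ℝ (⊤ : ℕ∞) (g i j) (Metric.ball (0 : ℝ) ε))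
    (hg0 : ∀ i j, g i j 0 ≠ 0)
    (hmatch : ∀ i j, ∀ᶠ θ in 𝓝[≠] (0 : ℝ),
      β i (z j * Circle.exp θ) = 1 / (θ * g i j θ))
    (hsign : ∀ j, Real.sign (g 0 j 0) = Real.sign (g 1 j 0)) :
    ∃ a b : Circle → ℝ,
      ContMDiff (𝓡 1) 𝓘(ℝ, ℝ) (⊤ : ℕ∞) a ∧ ContMDiff (𝓡 1) 𝓘(ℝ, ℝ) (⊤ : ℕ∞) b ∧
      (∀ w : Circle, 0 < b w) ∧
      ∀ w : Circle, w ∉ Set.range z → a w = b w * β 1 w - β 0 w := by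
  refine stmt_2_general z β hβ (fun _ θ => θ⁻¹) g
    (fun i j => (hg i j).imp' (Metric.ball 0) fun _ h => ⟨Metric.ball_mem_nhds 0 h.1, h.2⟩)
    (fun j => mul_pos_of_real_sign_eq (hg0 0 j) (hsign j)) ?_
  simpa only [one_div, mul_inv, ← div_eq_mul_inv] using hmatch
end

section
/- Let U ⊆ ℝ² be an open set containing (0,0), let a : ℝ → ℝ and ā₂, b̄₂ : U → ℝ be smooth. For the smooth vector fields G₁(x,y) = (1, x·a(x) + y·ā₂(x,y)) and G₂(x,y) = (0, y·b̄₂(x,y)) on U, the Lie bracket satisfies [G₁, G₂](x, 0) = (0, x·a(x)·b̄₂(x, 0)) for every x with (x,0) ∈ U, and the iterated bracket satisfies [G₁, [G₁, G₂]](0, 0) = (0, a(0)·b̄₂(0, 0)). -/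
/-!
For a function `f` and vector fields `V`, `W`, the Leibniz rule `[V, f W] = (V f) W + f [V, W]`
reduces to `[V, f W] = (V f) W` wherever `f = 0`. Hence `[V, [V, f W]] = (V (V f)) W`
wherever both `f` and `V f` vanish. Take `V = G₁`, `f = y` and `W = (0, b₂)`, so that `f W = G₂`.
Then `V f = x a(x) + y a₂`, which equals `x a(x)` on the axis `y = 0` and has derivative `a(0)`
along `G₁(0, 0) = (1, 0)` at the origin.
-/

open Asymptotics Filter Topology VectorField

section

variable {𝕜 : Type*} [NontriviallyNormedField 𝕜]
  {E : Type*} [NormedAddCommGroup E] [NormedSpace 𝕜 E]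
  {F : Type*} [NormedAddCommGroup F] [NormedSpace 𝕜 F]

theorem hasFDerivAt_smul_of_eq_zero {f : E → 𝕜} {f' : E →L[𝕜] 𝕜} {g : E → F} {x : E}
    (hf : HasFDerivAt f f' x) (hfx : f x = 0) (hg : ContinuousAt g x) :
    HasFDerivAt (fun y ↦ f y • g y) (f'.smulRight (g x)) x := by
  have hf_bigO : f =O[𝓝 x] fun y ↦ ‖y - x‖ := by
    simpa only [hfx, sub_zero] using hf.isBigO_sub.norm_right
  have hg_littleO : (fun y ↦ g y - g x) =o[𝓝 x] fun _ ↦ (1 : ℝ) :=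
    (isLittleO_one_iff ℝ).2 (tendsto_sub_nhds_zero_iff.2 hg)
  have h_remainder : HasFDerivAt (fun y ↦ f y • (g y - g x)) (0 : E →L[𝕜] F) x :=
    .of_isLittleO <| by simpa [hfx] using hf_bigO.smul_isLittleO hg_littleO
  simpa [smul_sub] using (hf.smul_const (g x)).fun_add h_remainder

variable {V W : E → E} {f : E → 𝕜} {x : E}

theorem lieBracket_smul_right_of_eq_zero (hf : DifferentiableAt 𝕜 f x) (hfx : f x = 0)
    (hW : ContinuousAt W x) :
    lieBracket 𝕜 V (fun y ↦ f y • W y) x = fderiv 𝕜 f x (V x) • W x := by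
  simp [lieBracket, (hasFDerivAt_smul_of_eq_zero hf.hasFDerivAt hfx hW).fderiv, hfx]

theorem lieBracket_lieBracket_smul_right_of_eq_zero (hV : ContDiffAt 𝕜 1 V x)
    (hW : ContDiffAt 𝕜 1 W x) (hf : ContDiffAt 𝕜 2 f x) (hfx : f x = 0)
    (hVfx : fderiv 𝕜 f x (V x) = 0) :
    lieBracket 𝕜 V (lieBracket 𝕜 V fun y ↦ f y • W y) x =
      fderiv 𝕜 (fun y ↦ fderiv 𝕜 f y (V y)) x (V x) • W x := by
  have leibniz : lieBracket 𝕜 V (fun y ↦ f y • W y) =ᶠ[𝓝 x]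
      (fun y ↦ fderiv 𝕜 f y (V y) • W y) + fun y ↦ f y • lieBracket 𝕜 V W y := by
    filter_upwards [hf.eventually (by simp), hW.eventually (by simp)] with y hfy hWy
    exact lieBracket_smul_right (hfy.differentiableAt two_ne_zero)
      (hWy.differentiableAt one_ne_zero)
  have hfd : DifferentiableAt 𝕜 f x := hf.differentiableAt two_ne_zero
  have hVf : DifferentiableAt 𝕜 (fun y ↦ fderiv 𝕜 f y (V y)) x :=
    ((hf.fderiv_right (m := 1) (by norm_num)).differentiableAt one_ne_zero).clm_apply
      (hV.differentiableAt one_ne_zero)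
  have hWd : DifferentiableAt 𝕜 W x := hW.differentiableAt one_ne_zero
  have hVW : ContinuousAt (lieBracket 𝕜 V W) x :=
    (hV.lieBracket_vectorField hW (m := 0) (by simp)).continuousAt
  rw [EventuallyEq.rfl.lieBracket_vectorField_eq leibniz,
    lieBracket_add_right (hVf.fun_smul hWd)
      (hasFDerivAt_smul_of_eq_zero hfd.hasFDerivAt hfx hVW).differentiableAt,
    lieBracket_smul_right_of_eq_zero hVf hVfx hWd.continuousAt,
    lieBracket_smul_right_of_eq_zero hfd hfx hVW, hVfx, zero_smul, add_zero]

theorem hasFDerivAt_fst_mul_add_snd_mul_zero {g h : 𝕜 × 𝕜 → 𝕜} (hg : ContinuousAt g 0)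
    (hh : ContinuousAt h 0) :
    HasFDerivAt (fun p ↦ p.1 * g p + p.2 * h p)
      ((ContinuousLinearMap.fst 𝕜 𝕜 𝕜).smulRight (g 0) +
        (ContinuousLinearMap.snd 𝕜 𝕜 𝕜).smulRight (h 0)) 0 :=
  (hasFDerivAt_smul_of_eq_zero (f := Prod.fst) hasFDerivAt_fst rfl hg).add
    (hasFDerivAt_smul_of_eq_zero (f := Prod.snd) hasFDerivAt_snd rfl hh)

theorem stmt_6_general {a : 𝕜 → 𝕜} {a₂ b₂ : 𝕜 × 𝕜 → 𝕜} {G₁ G₂ : 𝕜 × 𝕜 → 𝕜 × 𝕜}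
    (ha : ContDiffAt 𝕜 1 a 0) (ha₂ : ContDiffAt 𝕜 1 a₂ (0, 0)) (hb₂ : ContDiffAt 𝕜 1 b₂ (0, 0))
    (hG₁ : ∀ p, G₁ p = (1, p.1 * a p.1 + p.2 * a₂ p)) (hG₂ : ∀ p, G₂ p = (0, p.2 * b₂ p)) :
    (∀ x, ContinuousAt b₂ (x, 0) → lieBracket 𝕜 G₁ G₂ (x, 0) = (0, x * a x * b₂ (x, 0))) ∧
      lieBracket 𝕜 G₁ (lieBracket 𝕜 G₁ G₂) (0, 0) = (0, a 0 * b₂ (0, 0)) := by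
  have G₂_eq_smul : G₂ = fun p ↦ p.2 • ((0 : 𝕜), b₂ p) := by ext p <;> simp [hG₂]
  have fderiv_snd_G₁ (p : 𝕜 × 𝕜) :
      fderiv 𝕜 Prod.snd p (G₁ p) = p.1 * a p.1 + p.2 * a₂ p := by simp [fderiv_snd, hG₁]
  rw [G₂_eq_smul]
  constructor
  · intro x hb
    rw [lieBracket_smul_right_of_eq_zero (f := Prod.snd) differentiableAt_snd rfl (by fun_prop),
      fderiv_snd_G₁]
    simp
  · have hG₁_contDiffAt : ContDiffAt 𝕜 1 G₁ (0, 0) := by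
      rw [funext hG₁]
      fun_prop
    have fderiv_coefficient :
        fderiv 𝕜 (fun p ↦ p.1 * a p.1 + p.2 * a₂ p) (0, 0) (G₁ (0, 0)) = a 0 := by
      rw [← Prod.zero_eq_mk, (hasFDerivAt_fst_mul_add_snd_mul_zero
        (ContinuousAt.fst'' (x := 0) ha.continuousAt) ha₂.continuousAt).fderiv]
      simp [hG₁]
    rw [lieBracket_lieBracket_smul_right_of_eq_zero (f := Prod.snd) hG₁_contDiffAt (by fun_prop)
      contDiffAt_snd rfl (by simp [fderiv_snd_G₁])]
    simp [fderiv_snd_G₁, fderiv_coefficient]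

end

/-- for the vector fields `G₁(x,y) = (1, x·a(x) + y·ā₂(x,y))` and
`G₂(x,y) = (0, y·b̄₂(x,y))` on an open `U ⊆ ℝ²` containing the origin, with `a` smooth on `ℝ`
and `ā₂, b̄₂` smooth on `U`, the Lie bracket (computed as `[V,W](p) = DW(p)·V(p) − DV(p)·W(p)`)
satisfies `[G₁,G₂](x,0) = (0, x·a(x)·b̄₂(x,0))` for every `x` with `(x,0) ∈ U`, and the
iterated bracket satisfies `[G₁,[G₁,G₂]](0,0) = (0, a(0)·b̄₂(0,0))`. -/
theorem stmt_6 (U : Set (ℝ × ℝ)) (hU : IsOpen U) (h0 : ((0 : ℝ), (0 : ℝ)) ∈ U)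
    (a : ℝ → ℝ) (a₂ b₂ : ℝ × ℝ → ℝ)
    (ha : ContDiff ℝ (⊤ : ℕ∞) a)
    (ha₂ : ContDiffOn ℝ (⊤ : ℕ∞) a₂ U) (hb₂ : ContDiffOn ℝ (⊤ : ℕ∞) b₂ U)
    (G₁ G₂ B : ℝ × ℝ → ℝ × ℝ)
    (hG₁ : ∀ p, G₁ p = (1, p.1 * a p.1 + p.2 * a₂ p))
    (hG₂ : ∀ p, G₂ p = (0, p.2 * b₂ p))
    (hB : ∀ p, B p = fderiv ℝ G₂ p (G₁ p) - fderiv ℝ G₁ p (G₂ p)) :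
    (∀ x : ℝ, (x, (0 : ℝ)) ∈ U → B (x, 0) = ((0 : ℝ), x * a x * b₂ (x, 0))) ∧
    fderiv ℝ B (0, 0) (G₁ (0, 0)) - fderiv ℝ G₁ (0, 0) (B (0, 0))
      = ((0 : ℝ), a 0 * b₂ (0, 0)) := by
  obtain rfl : B = lieBracket ℝ G₁ G₂ := funext hB
  have contDiffAt_of_mem {g : ℝ × ℝ → ℝ} (hg : ContDiffOn ℝ (⊤ : ℕ∞) g U) {p} (hp : p ∈ U) :
      ContDiffAt ℝ 1 g p := (hg.contDiffAt (hU.mem_nhds hp)).of_le (mod_cast le_top)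
  have general := stmt_6_general (ha.contDiffAt.of_le (mod_cast le_top)) (contDiffAt_of_mem ha₂ h0)
    (contDiffAt_of_mem hb₂ h0) hG₁ hG₂
  exact ⟨fun x hx ↦ general.1 x (contDiffAt_of_mem hb₂ hx).continuousAt, general.2⟩
end
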